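/- arXiv:1906.12131 — 4 statements merged into one kernel-verified Lean document; each statement's English description precedes it below -/
import Mathlib

section
/- Let Ω ⊂ ℝ³ be a compact set and let B : ℝ³ → ℝ³ be Lipschitz on Ω. Then the correlation tensor δ^{[2]}_B(x₁,x₂) = G_B(x₁,x₂)², i.e. the square of the Gauss kernel, is integrable over Ω × Ω with respect to Lebesgue measure. -/
/-!
Since `B x₂ × B x₂ = 0`, the numerator of the Gauss kernel is
`((B x₁ - B x₂) × B x₂) ⋅ (x₁ - x₂)`. With `B` `L`-Lipschitz and bounded by `M` on the compact set
`Ω`, it is at most `L * M * ‖x₁ - x₂‖ ^ 2`, so `G_B ^ 2 ≤ C * ‖x₁ - x₂‖ ^ (-2)` on `Ω × Ω`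
(`gaussKernel_sq_le`). The singularity `‖x‖ ^ (-2)` is locally integrable in dimension three, and
`(x₁, x₂) ↦ 1_Ω(x₂) * g (x₁ - x₂)` is integrable on the product for every integrable `g`; taking for
`g` the singularity cut off to a large ball gives an integrable majorant
(`integrableOn_prod_norm_sub`).
-/

open MeasureTheory Real Filter
open scoped RealInnerProductSpace Topology

noncomputable section

/-- Three-dimensional Euclidean space. -/
abbrev E3 : Type := EuclideanSpace ℝ (Fin 3)

/-- The cross product on `ℝ³`. -/
def cross3 (a b : E3) : E3 :=
  (WithLp.equiv 2 (Fin 3 → ℝ)).symm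
    ![a 1 * b 2 - a 2 * b 1, a 2 * b 0 - a 0 * b 2, a 0 * b 1 - a 1 * b 0]

/-- The Gauss kernel of a vector field `B : ℝ³ → ℝ³`:
`G_B(x₁,x₂) = (1/(4π)) ((B(x₁) × B(x₂)) ⋅ (x₁ − x₂)) / ‖x₁ − x₂‖³`. -/
def gaussKernel (B : E3 → E3) (x₁ x₂ : E3) : ℝ :=
  (1 / (4 * π)) * ⟪cross3 (B x₁) (B x₂), x₁ - x₂⟫ / ‖x₁ - x₂‖ ^ 3

lemma inner_E3 (a b : E3) : ⟪a, b⟫ = a 0 * b 0 + a 1 * b 1 + a 2 * b 2 := by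
  simp [PiLp.inner_apply, Fin.sum_univ_three, mul_comm]

lemma norm_sq_E3 (a : E3) : ‖a‖ ^ 2 = a 0 ^ 2 + a 1 ^ 2 + a 2 ^ 2 := by
  rw [EuclideanSpace.real_norm_sq_eq, Fin.sum_univ_three]

lemma cross3_zero (a b : E3) : cross3 a b 0 = a 1 * b 2 - a 2 * b 1 := rfl
lemma cross3_one (a b : E3) : cross3 a b 1 = a 2 * b 0 - a 0 * b 2 := rfl
lemma cross3_two (a b : E3) : cross3 a b 2 = a 0 * b 1 - a 1 * b 0 := rfl

/-- By Lagrange's identity the defect of the squared inequality is `⟪a, b⟫ ^ 2`. -/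
lemma norm_cross3_le (a b : E3) : ‖cross3 a b‖ ≤ ‖a‖ * ‖b‖ := by
  refine le_of_sq_le_sq ?_ (by positivity)
  rw [mul_pow, norm_sq_E3, norm_sq_E3, norm_sq_E3, cross3_zero, cross3_one, cross3_two]
  nlinarith [sq_nonneg (a 0 * b 0 + a 1 * b 1 + a 2 * b 2)]

lemma cross3_sub_left (a b : E3) : cross3 (a - b) b = cross3 a b := by
  ext i
  fin_cases i <;> simp [cross3] <;> ring

lemma abs_inner_cross3_le (a b r : E3) : |⟪cross3 a b, r⟫| ≤ ‖a - b‖ * ‖b‖ * ‖r‖ := by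
  rw [← cross3_sub_left]
  exact (abs_real_inner_le_norm _ _).trans
    (mul_le_mul_of_nonneg_right (norm_cross3_le _ _) (norm_nonneg _))

/-- The Lipschitz bound cancels one power of the singularity of the Gauss kernel. On the diagonal
both sides vanish, by the conventions for division by zero and for negative powers of zero. -/
lemma gaussKernel_sq_le {Ω : Set E3} {B : E3 → E3} {L : NNReal} (hLip : LipschitzOnWith L B Ω)
    {M : ℝ} (hM : ∀ x ∈ Ω, ‖B x‖ ≤ M) {x y : E3} (hx : x ∈ Ω) (hy : y ∈ Ω) :
    gaussKernel B x y ^ 2 ≤ (1 / (4 * π) * (L * M)) ^ 2 * ‖x - y‖ ^ (-2 : ℝ) := by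
  rcases eq_or_ne x y with rfl | hxy
  · simp [gaussKernel]
  have hr : 0 < ‖x - y‖ := norm_pos_iff.2 (sub_ne_zero.2 hxy)
  have hd : ‖B x - B y‖ ≤ L * ‖x - y‖ := by
    simpa [dist_eq_norm] using hLip.dist_le_mul x hx y hy
  have hn : |⟪cross3 (B x) (B y), x - y⟫| ≤ L * M * ‖x - y‖ ^ 2 := by
    calc |⟪cross3 (B x) (B y), x - y⟫| ≤ ‖B x - B y‖ * ‖B y‖ * ‖x - y‖ := abs_inner_cross3_le _ _ _
      _ ≤ (L * ‖x - y‖) * M * ‖x - y‖ := by gcongr; exact hM y hy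
      _ = L * M * ‖x - y‖ ^ 2 := by ring
  have hG : |gaussKernel B x y| ≤ 1 / (4 * π) * (L * M) * ‖x - y‖⁻¹ := by
    have hc : (0 : ℝ) < 1 / (4 * π) := by positivity
    rw [gaussKernel, abs_div, abs_mul, abs_of_pos hc, abs_of_pos (pow_pos hr 3),
      div_le_iff₀ (pow_pos hr 3)]
    calc 1 / (4 * π) * |⟪cross3 (B x) (B y), x - y⟫|
        ≤ 1 / (4 * π) * (L * M * ‖x - y‖ ^ 2) := by gcongr
      _ = 1 / (4 * π) * (L * M) * ‖x - y‖⁻¹ * ‖x - y‖ ^ 3 := by field_simp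
  calc gaussKernel B x y ^ 2 = |gaussKernel B x y| ^ 2 := (sq_abs _).symm
    _ ≤ (1 / (4 * π) * (L * M) * ‖x - y‖⁻¹) ^ 2 := by gcongr
    _ = _ := by
      rw [mul_pow, Real.rpow_neg hr.le, inv_pow]
      norm_num

/-- The singularity `‖x - y‖ ^ (-2)` is integrable on bounded products in dimension three. -/
lemma integrableOn_prod_norm_sub {Ω : Set E3} (hΩ : IsCompact Ω) :
    IntegrableOn (fun p : E3 × E3 => ‖p.1 - p.2‖ ^ (-2 : ℝ)) (Ω ×ˢ Ω) volume := by
  obtain ⟨R, hR⟩ := hΩ.isBounded.exists_norm_le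
  have hg : IntegrableOn (fun x : E3 => ‖x‖ ^ (-2 : ℝ)) (Metric.ball 0 (2 * R + 1)) volume := by
    refine integrableOn_ball_of_norm_le_rpow (C := 1) (α := 2) (by simp) (by simp; norm_num)
      (Eventually.of_forall fun x => ?_)
      (by fun_prop : Measurable fun x : E3 => ‖x‖ ^ (-2 : ℝ)).aestronglyMeasurable
    rw [one_mul, Real.norm_of_nonneg (by positivity)]
  have hf : Integrable (Ω.indicator fun _ : E3 => (1 : ℝ)) volume :=
    (integrable_indicator_iff hΩ.measurableSet).2 (integrableOn_const hΩ.measure_lt_top.ne)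
  have h := hf.convolution_integrand (ContinuousLinearMap.mul ℝ ℝ)
    ((integrable_indicator_iff measurableSet_ball).2 hg)
  rw [← Measure.volume_eq_prod] at h
  refine h.integrableOn.congr_fun (fun p hp => ?_) (hΩ.measurableSet.prod hΩ.measurableSet)
  have hb : p.1 - p.2 ∈ Metric.ball (0 : E3) (2 * R + 1) := by
    rw [mem_ball_zero_iff]
    linarith [norm_sub_le p.1 p.2, hR _ hp.1, hR _ hp.2]
  simp [Set.indicator_of_mem hp.2, Set.indicator_of_mem hb]

lemma aestronglyMeasurable_gaussKernel {Ω : Set E3} (hΩ : MeasurableSet Ω) {B : E3 → E3}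
    (hB : ContinuousOn B Ω) :
    AEStronglyMeasurable (fun p : E3 × E3 => gaussKernel B p.1 p.2)
      (volume.restrict (Ω ×ˢ Ω)) := by
  have h1 : ContinuousOn (fun p : E3 × E3 => B p.1) (Ω ×ˢ Ω) :=
    hB.comp continuousOn_fst fun _ hp => hp.1
  have h2 : ContinuousOn (fun p : E3 × E3 => B p.2) (Ω ×ˢ Ω) :=
    hB.comp continuousOn_snd fun _ hp => hp.2
  have hnum : ContinuousOn
      (fun p : E3 × E3 => (1 / (4 * π)) * ⟪cross3 (B p.1) (B p.2), p.1 - p.2⟫) (Ω ×ˢ Ω) := by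
    have hc (i : Fin 3) : Continuous fun a : E3 => a i := by fun_prop
    have h1 (i : Fin 3) : ContinuousOn (fun p : E3 × E3 => B p.1 i) (Ω ×ˢ Ω) :=
      (hc i).comp_continuousOn h1
    have h2 (i : Fin 3) : ContinuousOn (fun p : E3 × E3 => B p.2 i) (Ω ×ˢ Ω) :=
      (hc i).comp_continuousOn h2
    have h3 (i : Fin 3) : ContinuousOn (fun p : E3 × E3 => (p.1 - p.2) i) (Ω ×ˢ Ω) :=
      ((hc i).comp (continuous_fst.sub continuous_snd)).continuousOn
    simp only [inner_E3, cross3_zero, cross3_one, cross3_two]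
    exact continuousOn_const.mul
      ((((((h1 1).mul (h2 2)).sub ((h1 2).mul (h2 1))).mul (h3 0)).add
        ((((h1 2).mul (h2 0)).sub ((h1 0).mul (h2 2))).mul (h3 1))).add
        ((((h1 0).mul (h2 1)).sub ((h1 1).mul (h2 0))).mul (h3 2)))
  have hden : Measurable fun p : E3 × E3 => ‖p.1 - p.2‖ ^ 3 := by fun_prop
  exact ((hnum.aestronglyMeasurable (hΩ.prod hΩ)).aemeasurable.div
    hden.aemeasurable).aestronglyMeasurable

/-- for a compact `Ω ⊂ ℝ³` and `B` Lipschitz on `Ω`, the correlation tensor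
`δ^{[2]}_B(x₁,x₂) = G_B(x₁,x₂)²` is integrable over `Ω × Ω`. -/
theorem stmt5 (Ω : Set E3) (hΩ : IsCompact Ω) (B : E3 → E3) (L : NNReal)
    (hLip : LipschitzOnWith L B Ω) :
    IntegrableOn (fun p : E3 × E3 => (gaussKernel B p.1 p.2) ^ 2) (Ω ×ˢ Ω) volume := by
  obtain ⟨M, hM⟩ := hΩ.exists_bound_of_continuousOn hLip.continuousOn
  have hmeas := hΩ.measurableSet
  refine Integrable.mono' ((integrableOn_prod_norm_sub hΩ).const_mul
    ((1 / (4 * π) * (L * M)) ^ 2)) ((aestronglyMeasurable_gaussKernel hmeas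
      hLip.continuousOn).pow 2) ?_
  refine (ae_restrict_iff' (hmeas.prod hmeas)).2 (Eventually.of_forall fun p hp => ?_)
  rw [Real.norm_of_nonneg (sq_nonneg _)]
  exact gaussKernel_sq_le hLip hM hp.1 hp.2
end
end

section
/- Let Ω ⊂ ℝ³ be the closed unit ball, and let B₁ ≡ e₁ and B₂ ≡ e₂ be the constant vector fields equal to the first and second standard basis vectors (both divergence-free). Then the squared mixed Gauss kernel G_{B₁,B₂}(x₁,x₂)² = (1/(16π²)) ((x₁ − x₂) ⋅ e₃)² / ‖x₁ − x₂‖⁶ is NOT integrable over Ω × Ω: its integral is +∞. Hence the correlation tensor δ^{[2]}_{B₁,B₂} for a pair of distinct magnetic fields, which has asymptotic ‖x₁ − x₂‖⁻⁴ near the diagonal, need not be integrable. -/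
/-!
The squared kernel depends only on `z = x₁ - x₂`: it is `h z = z₃² / (16 π² ‖z‖⁶)`
(`gaussKernelPair_sq`), which is homogeneous of degree `-4` on a space of dimension `3`.
For `I = ∫ h` over the ball of radius `1/2`, substituting `z ↦ 2z` shows that the integral of `h`
over the ball of radius `1/4` is `2 I`, so `2 I ≤ I`; since `h > 0` off a plane, `I > 0` and hence
`I = ∞` (`lintegral_sqKernel`). For each `x₁` in the ball of radius `1/2`, the unit ball contains
the ball of radius `1/2` about `x₁`, so the inner integral over `x₂` is infinite, and Tonelli's
theorem gives the divergence of the double integral.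
-/

open MeasureTheory Real Filter
open scoped RealInnerProductSpace Topology

noncomputable section

/-- The mixed Gauss kernel of a pair of vector fields `B₁, B₂ : ℝ³ → ℝ³`:
`G_{B₁,B₂}(x₁,x₂) = (1/(4π)) ((B₁(x₁) × B₂(x₂)) ⋅ (x₁ − x₂)) / ‖x₁ − x₂‖³`. -/
def gaussKernelPair (B₁ B₂ : E3 → E3) (x₁ x₂ : E3) : ℝ :=
  (1 / (4 * π)) * ⟪cross3 (B₁ x₁) (B₂ x₂), x₁ - x₂⟫ / ‖x₁ - x₂‖ ^ 3

/-- The squared mixed Gauss kernel of `e₁, e₂` as a function of the difference `z = x₁ - x₂`.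
At `z = 0` it takes the value `0`, as does the kernel itself on the diagonal. -/
def sqKernel (z : E3) : ℝ := (1 / (16 * π ^ 2)) * (z 2) ^ 2 / ‖z‖ ^ 6

lemma gaussKernelPair_sq (x₁ x₂ : E3) :
    (gaussKernelPair (fun _ => EuclideanSpace.single 0 (1 : ℝ))
      (fun _ => EuclideanSpace.single 1 (1 : ℝ)) x₁ x₂) ^ 2 = sqKernel (x₁ - x₂) := by
  have h : ⟪cross3 (EuclideanSpace.single 0 (1 : ℝ)) (EuclideanSpace.single 1 (1 : ℝ)),
      x₁ - x₂⟫ = (x₁ - x₂) 2 := by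
    simp [cross3, PiLp.inner_apply, Fin.sum_univ_three]
  unfold gaussKernelPair sqKernel
  rw [h, div_pow, mul_pow, ← pow_mul]
  congr 2
  ring

lemma measurable_sqKernel : Measurable sqKernel := by
  unfold sqKernel
  fun_prop

lemma sqKernel_two_smul (z : E3) : 16 * sqKernel ((2 : ℝ) • z) = sqKernel z := by
  unfold sqKernel
  rw [norm_smul, PiLp.smul_apply, smul_eq_mul, Real.norm_of_nonneg zero_le_two, mul_pow, mul_pow]
  by_cases hz : ‖z‖ = 0
  · simp [hz]
  · field_simp
    norm_num

/-- The scaling argument: the integral is positive and at least twice itself. -/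
lemma lintegral_sqKernel :
    ∫⁻ z in Metric.ball (0 : E3) (1 / 2), ENNReal.ofReal (sqKernel z) = ⊤ := by
  set s := Metric.ball (0 : E3) (1 / 2) with hs
  set H : E3 → ENNReal := s.indicator fun z => ENNReal.ofReal (sqKernel z) with hH
  have hHm : Measurable H :=
    (measurable_sqKernel.ennreal_ofReal).indicator measurableSet_ball
  rw [← lintegral_indicator measurableSet_ball]
  change ∫⁻ z, H z = ⊤
  have hle : ∀ z, 16 * H ((2 : ℝ) • z) ≤ H z := by
    intro z
    by_cases hz : (2 : ℝ) • z ∈ s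
    · have hz' : z ∈ s := by
        simp only [hs, mem_ball_zero_iff, norm_smul, Real.norm_of_nonneg zero_le_two] at hz ⊢
        linarith [norm_nonneg z]
      rw [hH, Set.indicator_of_mem hz, Set.indicator_of_mem hz', ← sqKernel_two_smul z,
        ENNReal.ofReal_mul (by norm_num)]
      simp
    · rw [hH, Set.indicator_of_notMem hz]
      simp
  have hscale : ∫⁻ z, H ((2 : ℝ) • z) = ENNReal.ofReal (1 / 8) * ∫⁻ z, H z := by
    rw [← lintegral_map (μ := volume) hHm (measurable_const_smul (2 : ℝ)),
      Measure.map_addHaar_smul volume two_ne_zero, lintegral_smul_measure]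
    norm_num [abs_of_pos]
  have hmain : 2 * ∫⁻ z, H z ≤ ∫⁻ z, H z := by
    calc 2 * ∫⁻ z, H z = 16 * (ENNReal.ofReal (1 / 8) * ∫⁻ z, H z) := by
          rw [← mul_assoc]
          congr 1
          rw [← ENNReal.ofReal_ofNat 16, ← ENNReal.ofReal_mul (by norm_num)]
          norm_num
      _ = ∫⁻ z, 16 * H ((2 : ℝ) • z) := by
          rw [← hscale]
          exact (lintegral_const_mul _ (hHm.comp (measurable_const_smul (2 : ℝ)))).symm
      _ ≤ ∫⁻ z, H z := lintegral_mono hle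
  have hpos : 0 < ∫⁻ z, H z := by
    rw [lintegral_pos_iff_support hHm]
    have hopen : IsOpen (s ∩ {z : E3 | z 2 ≠ 0}) :=
      Metric.isOpen_ball.inter (isOpen_ne_fun (by fun_prop) continuous_const)
    refine (hopen.measure_pos volume ⟨EuclideanSpace.single 2 (1 / 4 : ℝ), ?_, ?_⟩).trans_le
      (measure_mono ?_)
    · simp only [hs, mem_ball_zero_iff, PiLp.norm_single]
      norm_num
    · simp
    · rintro z ⟨hz, hz2⟩
      have hz0 : z ≠ 0 := by
        rintro rfl
        exact hz2 rfl
      have hz2' : z 2 ≠ 0 := hz2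
      have hk : 0 < sqKernel z := by
        unfold sqKernel
        positivity
      rw [Function.mem_support, hH, Set.indicator_of_mem hz]
      exact (ENNReal.ofReal_pos.2 hk).ne'
  by_contra hfin
  refine hmain.not_gt ?_
  rw [two_mul]
  exact ENNReal.lt_add_right hfin hpos.ne'

lemma setLIntegral_gaussKernelPair_sq :
    ∫⁻ p in (Metric.closedBall (0 : E3) 1) ×ˢ (Metric.closedBall (0 : E3) 1),
      ENNReal.ofReal (sqKernel (p.1 - p.2)) = ⊤ := by
  have hm : Measurable fun p : E3 × E3 => ENNReal.ofReal (sqKernel (p.1 - p.2)) :=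
    (measurable_sqKernel.comp (measurable_fst.sub measurable_snd)).ennreal_ofReal
  rw [Measure.volume_eq_prod, setLIntegral_prod _ hm.aemeasurable]
  have hinner : ∀ x ∈ Metric.ball (0 : E3) (1 / 2),
      ∫⁻ y in Metric.closedBall (0 : E3) 1, ENNReal.ofReal (sqKernel (x - y)) = ⊤ := by
    intro x hx
    have hsub : Metric.ball x (1 / 2) ⊆ Metric.closedBall (0 : E3) 1 := by
      intro y hy
      have := dist_triangle y x 0
      rw [Metric.mem_ball] at hx hy
      rw [Metric.mem_closedBall]
      linarith
    refine top_unique ((le_of_eq ?_).trans (lintegral_mono_set hsub))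
    rw [← lintegral_sqKernel, ← lintegral_indicator measurableSet_ball,
      ← lintegral_indicator measurableSet_ball, ← lintegral_sub_left_eq_self _ x]
    congr 1
    ext y
    simp only [Set.indicator, Metric.mem_ball, dist_eq_norm, sub_zero, norm_sub_rev y x]
  refine top_unique (le_trans ?_ (lintegral_mono_set
    (Metric.ball_subset_closedBall.trans (Metric.closedBall_subset_closedBall
      (by norm_num : (1 / 2 : ℝ) ≤ 1)))))
  rw [setLIntegral_congr_fun measurableSet_ball hinner, setLIntegral_const,
    ENNReal.top_mul (Metric.measure_ball_pos volume _ (by norm_num)).ne']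

/-- on the closed unit ball `Ω ⊂ ℝ³`, for the constant (divergence-free) fields
`B₁ ≡ e₁`, `B₂ ≡ e₂`, the squared mixed Gauss kernel equals
`(1/(16π²)) ((x₁ − x₂) ⋅ e₃)² / ‖x₁ − x₂‖⁶` off the diagonal, and it is NOT integrable
over `Ω × Ω`: its (lower Lebesgue) integral is `+∞`. -/
theorem stmt6 :
    (∀ x₁ x₂ : E3, x₁ ≠ x₂ →
      (gaussKernelPair (fun _ => EuclideanSpace.single 0 (1 : ℝ))
          (fun _ => EuclideanSpace.single 1 (1 : ℝ)) x₁ x₂) ^ 2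
        = (1 / (16 * π ^ 2)) * ⟪x₁ - x₂, (EuclideanSpace.single 2 (1 : ℝ) : E3)⟫ ^ 2
            / ‖x₁ - x₂‖ ^ 6) ∧
    (∫⁻ p in (Metric.closedBall (0 : E3) 1) ×ˢ (Metric.closedBall (0 : E3) 1),
        ENNReal.ofReal ((gaussKernelPair (fun _ => EuclideanSpace.single 0 (1 : ℝ))
          (fun _ => EuclideanSpace.single 1 (1 : ℝ)) p.1 p.2) ^ 2)) = ⊤ ∧
    ¬ IntegrableOn
        (fun p : E3 × E3 => (gaussKernelPair (fun _ => EuclideanSpace.single 0 (1 : ℝ))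
          (fun _ => EuclideanSpace.single 1 (1 : ℝ)) p.1 p.2) ^ 2)
        ((Metric.closedBall (0 : E3) 1) ×ˢ (Metric.closedBall (0 : E3) 1)) volume := by
  have htop : ∫⁻ p in (Metric.closedBall (0 : E3) 1) ×ˢ (Metric.closedBall (0 : E3) 1),
      ENNReal.ofReal ((gaussKernelPair (fun _ => EuclideanSpace.single 0 (1 : ℝ))
        (fun _ => EuclideanSpace.single 1 (1 : ℝ)) p.1 p.2) ^ 2) = ⊤ := by
    simp only [gaussKernelPair_sq]
    exact setLIntegral_gaussKernelPair_sq
  refine ⟨fun x₁ x₂ _ => ?_, htop, fun hint => ?_⟩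
  · rw [gaussKernelPair_sq, sqKernel]
    simp [EuclideanSpace.inner_single_right]
  · exact hint.lintegral_lt_top.ne htop
end
end

section
/- Let Ω ⊂ ℝ³ be a convex compact set and let B₁, B₂ : ℝ³ → ℝ³ be bounded on Ω and differentiable with Lipschitz derivative on Ω. Then there is a constant C ≥ 0 such that for all x₁, x₂ ∈ Ω, |(B₁(x₁) × B₂(x₂) + B₂(x₁) × B₁(x₂)) ⋅ (x₁ − x₂)| ≤ C · ‖x₁ − x₂‖². (The first-order terms in the Taylor expansion cancel by antisymmetry of the triple product, so the symmetrized numerator vanishes to second order on the diagonal.) -/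
/-!
By antisymmetry of the cross product,
`B₁ x₁ × B₂ x₂ + B₂ x₁ × B₁ x₂ = (B₁ x₁ - B₁ x₂) × B₂ x₂ + B₁ x₂ × (B₂ x₂ - B₂ x₁)`
(`cross3_symm_eq`). A field whose derivative is Lipschitz on a compact set has bounded derivative
there, so on the convex set `Ω` the fields are Lipschitz (`exists_lipschitz_bound`). The vector
above is therefore `O(‖x₁ - x₂‖)`, using `‖a × b‖ ≤ ‖a‖ ‖b‖`, and pairing it with `x₁ - x₂` gives
the second factor.
-/

open MeasureTheory Real Filter
open scoped RealInnerProductSpace Topology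

noncomputable section

/-- The symmetrized product `u × v' + v × u'`, written through the increments `u - u'`, `v' - v`. -/
lemma cross3_symm_eq (u u' v v' : E3) :
    cross3 u v' + cross3 v u' = cross3 (u - u') v' + cross3 u' (v' - v) := by
  ext i
  fin_cases i <;> simp [cross3] <;> ring

lemma exists_lipschitz_bound {Ω : Set E3} (hconv : Convex ℝ Ω) (hcomp : IsCompact Ω)
    {B : E3 → E3} (hd : ∀ x ∈ Ω, DifferentiableAt ℝ B x) {K : NNReal}
    (hK : LipschitzOnWith K (fderiv ℝ B) Ω) :
    ∃ L : ℝ, 0 ≤ L ∧ ∀ x ∈ Ω, ∀ y ∈ Ω, ‖B x - B y‖ ≤ L * ‖x - y‖ := by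
  obtain ⟨L, hL⟩ := hcomp.exists_bound_of_continuousOn hK.continuousOn
  refine ⟨max L 0, le_max_right _ _, fun x hx y hy => ?_⟩
  exact hconv.norm_image_sub_le_of_norm_fderiv_le hd
    (fun z hz => (hL z hz).trans (le_max_left _ _)) hy hx

/-- for a convex compact `Ω ⊂ ℝ³` and fields `B₁, B₂` that are bounded on `Ω` and
differentiable with Lipschitz derivative on `Ω`, the symmetrized numerator
`(B₁(x₁) × B₂(x₂) + B₂(x₁) × B₁(x₂)) ⋅ (x₁ − x₂)` vanishes to second order on the diagonal:
it is bounded by `C · ‖x₁ − x₂‖²` for some constant `C ≥ 0`. -/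
theorem stmt8 (Ω : Set E3) (hconv : Convex ℝ Ω) (hcomp : IsCompact Ω)
    (B₁ B₂ : E3 → E3) (M : ℝ)
    (hM₁ : ∀ x ∈ Ω, ‖B₁ x‖ ≤ M) (hM₂ : ∀ x ∈ Ω, ‖B₂ x‖ ≤ M)
    (hd₁ : ∀ x ∈ Ω, DifferentiableAt ℝ B₁ x) (hd₂ : ∀ x ∈ Ω, DifferentiableAt ℝ B₂ x)
    (K₁ K₂ : NNReal)
    (hK₁ : LipschitzOnWith K₁ (fderiv ℝ B₁) Ω) (hK₂ : LipschitzOnWith K₂ (fderiv ℝ B₂) Ω) :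
    ∃ C : ℝ, 0 ≤ C ∧ ∀ x₁ ∈ Ω, ∀ x₂ ∈ Ω,
      |⟪cross3 (B₁ x₁) (B₂ x₂) + cross3 (B₂ x₁) (B₁ x₂), x₁ - x₂⟫|
        ≤ C * ‖x₁ - x₂‖ ^ 2 := by
  obtain ⟨L₁, hL₁, h₁⟩ := exists_lipschitz_bound hconv hcomp hd₁ hK₁
  obtain ⟨L₂, hL₂, h₂⟩ := exists_lipschitz_bound hconv hcomp hd₂ hK₂
  -- `|M|` keeps the constant nonnegative when `Ω` is empty and `M` may be negative.
  refine ⟨(L₁ + L₂) * |M|, by positivity, fun x₁ hx₁ x₂ hx₂ => ?_⟩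
  have hB₂ : ‖B₂ x₂‖ ≤ |M| := (hM₂ x₂ hx₂).trans (le_abs_self M)
  have hB₁ : ‖B₁ x₂‖ ≤ |M| := (hM₁ x₂ hx₂).trans (le_abs_self M)
  have hcross : ‖cross3 (B₁ x₁) (B₂ x₂) + cross3 (B₂ x₁) (B₁ x₂)‖
      ≤ (L₁ + L₂) * |M| * ‖x₁ - x₂‖ := by
    rw [cross3_symm_eq]
    calc ‖cross3 (B₁ x₁ - B₁ x₂) (B₂ x₂) + cross3 (B₁ x₂) (B₂ x₂ - B₂ x₁)‖
        ≤ ‖B₁ x₁ - B₁ x₂‖ * ‖B₂ x₂‖ + ‖B₁ x₂‖ * ‖B₂ x₂ - B₂ x₁‖ :=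
          norm_add_le_of_le (norm_cross3_le _ _) (norm_cross3_le _ _)
      _ ≤ (L₁ * ‖x₁ - x₂‖) * |M| + |M| * (L₂ * ‖x₁ - x₂‖) := by
          gcongr
          · exact h₁ x₁ hx₁ x₂ hx₂
          · rw [norm_sub_rev]
            exact h₂ x₁ hx₁ x₂ hx₂
      _ = (L₁ + L₂) * |M| * ‖x₁ - x₂‖ := by ring
  calc |⟪cross3 (B₁ x₁) (B₂ x₂) + cross3 (B₂ x₁) (B₁ x₂), x₁ - x₂⟫|
      ≤ ‖cross3 (B₁ x₁) (B₂ x₂) + cross3 (B₂ x₁) (B₁ x₂)‖ * ‖x₁ - x₂‖ :=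
        abs_real_inner_le_norm _ _
    _ ≤ (L₁ + L₂) * |M| * ‖x₁ - x₂‖ * ‖x₁ - x₂‖ := by gcongr
    _ = (L₁ + L₂) * |M| * ‖x₁ - x₂‖ ^ 2 := by ring
end
end

section
/- Let Ω ⊂ ℝ³ be a convex compact set and let B₁, B₂ : ℝ³ → ℝ³ be bounded on Ω and differentiable with Lipschitz derivative on Ω. Then the symmetrized correlation tensor δ^{[2];sim}_{B₁,B₂}(x₁,x₂) = (1/2)[G_{B₁+B₂}(x₁,x₂) − G_{B₁}(x₁,x₂) − G_{B₂}(x₁,x₂)]² is integrable over Ω × Ω with respect to Lebesgue measure: the symmetrization keeps the integrability. -/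
/-!
By bilinearity of the cross product, the polarized kernel `G_{B₁+B₂} - G_{B₁} - G_{B₂}` at `(x, y)`
has numerator `(B₁ x × B₂ y + B₂ x × B₁ y) ⋅ (x - y)` (`gaussKernel_polar`). Antisymmetry makes the
first factor vanish at `x = y`, and `B₁`, `B₂` are bounded and Lipschitz on `Ω`
(`exists_lipschitzOnWith`), so the numerator is `O(‖x - y‖²)` (`abs_polarNum_le`). The squared
kernel is therefore `O(‖x - y‖⁻²)`, which is integrable over `Ω × Ω` since `‖z‖⁻²` is locally
integrable in dimension three (`integrableOn_inv_norm_sub_sq`).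
-/

open MeasureTheory Real Filter
open scoped RealInnerProductSpace Topology

noncomputable section

lemma continuous_cross3 : Continuous fun p : E3 × E3 => cross3 p.1 p.2 := by
  unfold cross3
  simp only [WithLp.equiv_symm_apply]
  refine (PiLp.continuous_toLp 2 _).comp (continuous_pi fun i => ?_)
  fin_cases i <;> simp <;> fun_prop

/-- The numerator of the polarized Gauss kernel. It vanishes on the diagonal because the cross
product is antisymmetric. -/
def polarNum (B₁ B₂ : E3 → E3) (x y : E3) : ℝ :=
  ⟪cross3 (B₁ x) (B₂ y) + cross3 (B₂ x) (B₁ y), x - y⟫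

lemma gaussKernel_polar (B₁ B₂ : E3 → E3) (x y : E3) :
    gaussKernel (fun x => B₁ x + B₂ x) x y - gaussKernel B₁ x y - gaussKernel B₂ x y
      = (1 / (4 * π)) * polarNum B₁ B₂ x y / ‖x - y‖ ^ 3 := by
  have h : cross3 (B₁ x + B₂ x) (B₁ y + B₂ y) = cross3 (B₁ x) (B₁ y) + cross3 (B₂ x) (B₂ y)
      + (cross3 (B₁ x) (B₂ y) + cross3 (B₂ x) (B₁ y)) := by
    ext i; fin_cases i <;> simp [cross3] <;> ring
  simp only [gaussKernel, polarNum, h, inner_add_left]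
  ring

lemma abs_polarNum_le {Ω : Set E3} {B₁ B₂ : E3 → E3} {M : ℝ}
    (hM₁ : ∀ x ∈ Ω, ‖B₁ x‖ ≤ M) (hM₂ : ∀ x ∈ Ω, ‖B₂ x‖ ≤ M) {L₁ L₂ : NNReal}
    (hL₁ : LipschitzOnWith L₁ B₁ Ω) (hL₂ : LipschitzOnWith L₂ B₂ Ω)
    {x y : E3} (hx : x ∈ Ω) (hy : y ∈ Ω) :
    |polarNum B₁ B₂ x y| ≤ M * (L₁ + L₂) * ‖x - y‖ ^ 2 := by
  have hM : 0 ≤ M := (norm_nonneg _).trans (hM₁ x hx)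
  -- Subtract the diagonal value `cross3 (B₁ x) (B₂ x) + cross3 (B₂ x) (B₁ x) = 0`.
  have h : cross3 (B₁ x) (B₂ y) + cross3 (B₂ x) (B₁ y)
      = cross3 (B₁ x) (B₂ y - B₂ x) + cross3 (B₂ x) (B₁ y - B₁ x) := by
    ext i; fin_cases i <;> simp [cross3] <;> ring
  have h1 : ‖B₁ y - B₁ x‖ ≤ L₁ * ‖x - y‖ := by
    rw [norm_sub_rev x y]; exact hL₁.norm_sub_le hy hx
  have h2 : ‖B₂ y - B₂ x‖ ≤ L₂ * ‖x - y‖ := by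
    rw [norm_sub_rev x y]; exact hL₂.norm_sub_le hy hx
  have h3 : ‖cross3 (B₁ x) (B₂ y - B₂ x)‖ ≤ M * (L₂ * ‖x - y‖) :=
    (norm_cross3_le _ _).trans (mul_le_mul (hM₁ x hx) h2 (norm_nonneg _) hM)
  have h4 : ‖cross3 (B₂ x) (B₁ y - B₁ x)‖ ≤ M * (L₁ * ‖x - y‖) :=
    (norm_cross3_le _ _).trans (mul_le_mul (hM₂ x hx) h1 (norm_nonneg _) hM)
  rw [polarNum, h]
  calc _ ≤ ‖cross3 (B₁ x) (B₂ y - B₂ x) + cross3 (B₂ x) (B₁ y - B₁ x)‖ * ‖x - y‖ :=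
        abs_real_inner_le_norm _ _
    _ ≤ (M * (L₂ * ‖x - y‖) + M * (L₁ * ‖x - y‖)) * ‖x - y‖ := by
        gcongr; exact (norm_add_le _ _).trans (add_le_add h3 h4)
    _ = _ := by ring

lemma continuousOn_polarNum {Ω : Set E3} {B₁ B₂ : E3 → E3}
    (h₁ : ContinuousOn B₁ Ω) (h₂ : ContinuousOn B₂ Ω) :
    ContinuousOn (fun p : E3 × E3 => polarNum B₁ B₂ p.1 p.2) (Ω ×ˢ Ω) := by
  have fst {B : E3 → E3} (h : ContinuousOn B Ω) :
      ContinuousOn (fun p : E3 × E3 => B p.1) (Ω ×ˢ Ω) :=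
    h.comp continuousOn_fst fun p hp => hp.1
  have snd {B : E3 → E3} (h : ContinuousOn B Ω) :
      ContinuousOn (fun p : E3 × E3 => B p.2) (Ω ×ˢ Ω) :=
    h.comp continuousOn_snd fun p hp => hp.2
  exact ((continuous_cross3.comp_continuousOn ((fst h₁).prodMk (snd h₂))).add
    (continuous_cross3.comp_continuousOn ((fst h₂).prodMk (snd h₁)))).inner
    (by fun_prop)

/-- The singularity `‖x‖⁻²` is integrable near the origin of `ℝ³`: in polar coordinates it is
compensated by the Jacobian `r²`. -/
lemma integrable_inv_norm_sq (R : ℝ) :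
    Integrable (fun x : E3 => (Set.Iio R).indicator (fun r : ℝ => (r ^ 2)⁻¹) ‖x‖) := by
  rw [integrable_fun_norm_addHaar volume]
  have hI : IntegrableOn (fun _ : ℝ => (1 : ℝ)) (Set.Ioo 0 R) := by simp
  have : IntegrableOn ((Set.Iio R).indicator fun _ : ℝ => (1 : ℝ)) (Set.Ioi 0) := by
    rw [IntegrableOn, integrable_indicator_iff measurableSet_Iio, IntegrableOn,
      Measure.restrict_restrict measurableSet_Iio, Set.inter_comm, Set.Ioi_inter_Iio]
    exact hI
  refine this.congr_fun (fun r hr => ?_) measurableSet_Ioi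
  have hr : (0 : ℝ) < r := hr
  by_cases h : r < R
  · simp [h, hr.ne']
  · simp [h]

lemma integrableOn_inv_norm_sub_sq {Ω : Set E3} (hcomp : IsCompact Ω) :
    IntegrableOn (fun p : E3 × E3 => (‖p.1 - p.2‖ ^ 2)⁻¹) (Ω ×ˢ Ω) volume := by
  obtain ⟨R, hR⟩ := hcomp.isBounded.exists_norm_le
  have hm : MeasurableSet Ω := hcomp.isClosed.measurableSet
  have h1 : Integrable (Ω.indicator fun _ : E3 => (1 : ℝ)) := by
    rw [integrable_indicator_iff hm]
    exact integrableOn_const hcomp.measure_lt_top.ne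
  have h := h1.convolution_integrand (ContinuousLinearMap.mul ℝ ℝ)
    (integrable_inv_norm_sq (2 * R + 1))
  refine (h.integrableOn (s := Ω ×ˢ Ω)).congr_fun (fun p hp => ?_) (hm.prod hm)
  have hlt : ‖p.1 - p.2‖ < 2 * R + 1 := by
    linarith [norm_sub_le p.1 p.2, hR _ hp.1, hR _ hp.2]
  simp [hp.2, hlt]

/-- On a convex compact set, a field with Lipschitz derivative is itself Lipschitz, the derivative
being bounded by compactness. -/
lemma exists_lipschitzOnWith {Ω : Set E3} (hconv : Convex ℝ Ω) (hcomp : IsCompact Ω)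
    {B : E3 → E3} (hd : ∀ x ∈ Ω, DifferentiableAt ℝ B x) {K : NNReal}
    (hK : LipschitzOnWith K (fderiv ℝ B) Ω) : ∃ L : NNReal, LipschitzOnWith L B Ω := by
  obtain ⟨C, hC⟩ := hcomp.exists_bound_of_continuousOn hK.continuousOn
  exact ⟨C.toNNReal, hconv.lipschitzOnWith_of_nnnorm_fderiv_le hd fun x hx =>
    NNReal.le_toNNReal_of_coe_le (hC x hx)⟩

/-- for a convex compact `Ω ⊂ ℝ³` and fields `B₁, B₂` that are bounded on `Ω` and
differentiable with Lipschitz derivative on `Ω`, the symmetrized correlation tensor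
`δ^{[2];sim}_{B₁,B₂}(x₁,x₂) = (1/2)[G_{B₁+B₂}(x₁,x₂) − G_{B₁}(x₁,x₂) − G_{B₂}(x₁,x₂)]²`
is integrable over `Ω × Ω`: the symmetrization keeps the integrability. -/
theorem stmt9 (Ω : Set E3) (hconv : Convex ℝ Ω) (hcomp : IsCompact Ω)
    (B₁ B₂ : E3 → E3) (M : ℝ)
    (hM₁ : ∀ x ∈ Ω, ‖B₁ x‖ ≤ M) (hM₂ : ∀ x ∈ Ω, ‖B₂ x‖ ≤ M)
    (hd₁ : ∀ x ∈ Ω, DifferentiableAt ℝ B₁ x) (hd₂ : ∀ x ∈ Ω, DifferentiableAt ℝ B₂ x)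
    (K₁ K₂ : NNReal)
    (hK₁ : LipschitzOnWith K₁ (fderiv ℝ B₁) Ω) (hK₂ : LipschitzOnWith K₂ (fderiv ℝ B₂) Ω) :
    IntegrableOn
      (fun p : E3 × E3 =>
        (1 / 2) * (gaussKernel (fun x => B₁ x + B₂ x) p.1 p.2
          - gaussKernel B₁ p.1 p.2 - gaussKernel B₂ p.1 p.2) ^ 2)
      (Ω ×ˢ Ω) volume := by
  obtain ⟨L₁, hL₁⟩ := exists_lipschitzOnWith hconv hcomp hd₁ hK₁
  obtain ⟨L₂, hL₂⟩ := exists_lipschitzOnWith hconv hcomp hd₂ hK₂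
  have hm : MeasurableSet (Ω ×ˢ Ω) :=
    hcomp.isClosed.measurableSet.prod hcomp.isClosed.measurableSet
  simp only [gaussKernel_polar]
  have hN := (continuousOn_polarNum hL₁.continuousOn hL₂.continuousOn).aemeasurable (μ := volume) hm
  refine ((integrableOn_inv_norm_sub_sq hcomp).const_mul
    (1 / 2 * (1 / (4 * π) * (M * (L₁ + L₂))) ^ 2)).mono' ?_ ?_
  · have hr : Measurable fun p : E3 × E3 => ‖p.1 - p.2‖ ^ 3 := by fun_prop
    exact ((((hN.const_mul _).div hr.aemeasurable).pow_const 2).const_mul _).aestronglyMeasurable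
  · refine (ae_restrict_iff' hm).2 (Eventually.of_forall fun p hp => ?_)
    have hb := abs_polarNum_le hM₁ hM₂ hL₁ hL₂ hp.1 hp.2
    rw [Real.norm_of_nonneg (by positivity)]
    rcases eq_or_ne ‖p.1 - p.2‖ 0 with h0 | h0
    -- On the diagonal both sides are `0`, by the convention `0⁻¹ = 0`.
    · simp [h0]
    · calc _ = 1 / 2 * (1 / (4 * π)) ^ 2 * |polarNum B₁ B₂ p.1 p.2| ^ 2 / ‖p.1 - p.2‖ ^ 6 := by
            rw [sq_abs]; field_simp
        _ ≤ 1 / 2 * (1 / (4 * π)) ^ 2 * (M * (L₁ + L₂) * ‖p.1 - p.2‖ ^ 2) ^ 2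
              / ‖p.1 - p.2‖ ^ 6 := by gcongr
        _ = _ := by field_simp
end
end
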